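/- arXiv:math/0611922 — 2 statements merged into one kernel-verified Lean document; each statement's English description precedes it below -/
import Mathlib

section
/- Let f : ℝ → ℝ be a twice continuously differentiable function with f(x) > 0 for all x, satisfying f(x)·f''(x) = 1 + f'(x)² for all x ∈ ℝ. Then there exist constants c > 0 and a ∈ ℝ such that f(x) = c·cosh((x − a)/c) for all x ∈ ℝ. (This is the analytic content of Euler's theorem that the catenoid is the only nonplanar complete minimal surface of revolution in ℝ³.) -/
open Real

/-!
The quantity `c = f / √(1 + f' ^ 2)` is a first integral of the equation `f * f'' = 1 + f' ^ 2`.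
Since `(arsinh f')' = f'' / √(1 + f' ^ 2) = 1 / c`, there is some `a` with
`arsinh (f' x) = (x - a) / c`, and `f = c * √(1 + f' ^ 2) = c * cosh (arsinh f')`.
-/

section ConstantDerivative

variable {𝕜 E : Type*} [RCLike 𝕜] [NormedAddCommGroup E] [NormedSpace 𝕜 E] {s : Set 𝕜}
  {g : 𝕜 → E} {x y : 𝕜}

theorem eq_of_forall_hasDerivWithinAt_zero (hs : Convex ℝ s)
    (hg : ∀ z ∈ s, HasDerivWithinAt g 0 s z) (hx : x ∈ s) (hy : y ∈ s) : g x = g y := by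
  have hle : ‖g x - g y‖ ≤ 0 * ‖x - y‖ :=
    hs.norm_image_sub_le_of_norm_hasDerivWithin_le hg (fun _ _ => norm_zero.le) hy hx
  rwa [zero_mul, norm_le_zero_iff, sub_eq_zero] at hle

theorem sub_eq_smul_of_forall_hasDerivWithinAt_const {k : E} (hs : Convex ℝ s)
    (hg : ∀ z ∈ s, HasDerivWithinAt g k s z) (hx : x ∈ s) (hy : y ∈ s) :
    g x - g y = (x - y) • k := by
  have hderiv : ∀ z ∈ s, HasDerivWithinAt (fun w => g w - w • k) 0 s z := fun z hz =>
    ((hg z hz).fun_sub ((hasDerivWithinAt_id z s).smul_const k)).congr_deriv (by simp)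
  rw [sub_smul]
  exact sub_eq_sub_iff_sub_eq_sub.mp (eq_of_forall_hasDerivWithinAt_zero hs hderiv hx hy)

theorem exists_eq_sub_div_of_forall_hasDerivWithinAt_inv {h : 𝕜 → 𝕜} {c : 𝕜} (hs : Convex ℝ s)
    (hc : c ≠ 0) (hh : ∀ z ∈ s, HasDerivWithinAt h c⁻¹ s z) :
    ∃ a, ∀ z ∈ s, h z = (z - a) / c := by
  rcases s.eq_empty_or_nonempty with rfl | ⟨z₀, hz₀⟩
  · exact ⟨0, by simp⟩
  refine ⟨z₀ - c * h z₀, fun z hz => ?_⟩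
  have haffine : h z - h z₀ = (z - z₀) • c⁻¹ :=
    sub_eq_smul_of_forall_hasDerivWithinAt_const hs hh hz hz₀
  rw [eq_add_of_sub_eq haffine, smul_eq_mul]
  field_simp
  ring

end ConstantDerivative

section CatenaryEquation

theorem ne_zero_of_mul_eq_one_add_sq {y p q : ℝ} (h : y * q = 1 + p ^ 2) : y ≠ 0 :=
  left_ne_zero_of_mul (h.trans_ne (by positivity))

variable {s : Set ℝ} {f f' f'' : ℝ → ℝ} {q x : ℝ}

theorem hasDerivWithinAt_sqrt_one_add_sq (hf' : HasDerivWithinAt f' q s x) :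
    HasDerivWithinAt (fun y => √(1 + f' y ^ 2)) (f' x * q / √(1 + f' x ^ 2)) s x := by
  have hne : 1 + f' x ^ 2 ≠ 0 := by positivity
  refine (((hf'.fun_pow 2).const_add 1).sqrt hne).congr_deriv ?_
  simp only [Nat.cast_ofNat, Nat.add_one_sub_one, pow_one]
  field_simp

theorem hasDerivWithinAt_div_sqrt_of_mul_eq_one_add_sq (hf : HasDerivWithinAt f (f' x) s x)
    (hf' : HasDerivWithinAt f' q s x) (hode : f x * q = 1 + f' x ^ 2) :
    HasDerivWithinAt (fun y => f y / √(1 + f' y ^ 2)) 0 s x := by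
  have hsq : √(1 + f' x ^ 2) ^ 2 = 1 + f' x ^ 2 := sq_sqrt (by positivity)
  have hne : √(1 + f' x ^ 2) ≠ 0 := by positivity
  refine (hf.fun_div (hasDerivWithinAt_sqrt_one_add_sq hf') hne).congr_deriv ?_
  field_simp
  linear_combination f' x * (hsq - hode)

theorem hasDerivWithinAt_arsinh_of_mul_eq_one_add_sq {y : ℝ}
    (hf' : HasDerivWithinAt f' q s x) (hode : y * q = 1 + f' x ^ 2) :
    HasDerivWithinAt (fun z => arsinh (f' z)) (y / √(1 + f' x ^ 2))⁻¹ s x := by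
  have hq : q = (1 + f' x ^ 2) / y :=
    eq_div_of_mul_eq (ne_zero_of_mul_eq_one_add_sq hode) (by rw [mul_comm, hode])
  refine hf'.arsinh.congr_deriv ?_
  rw [smul_eq_mul, inv_mul_eq_div, inv_div, hq, div_right_comm, div_sqrt]

theorem exists_eq_mul_sqrt_one_add_sq (hs : Convex ℝ s)
    (hf : ∀ x ∈ s, HasDerivWithinAt f (f' x) s x)
    (hf' : ∀ x ∈ s, HasDerivWithinAt f' (f'' x) s x)
    (hode : ∀ x ∈ s, f x * f'' x = 1 + f' x ^ 2) :
    ∃ c ≠ 0, ∀ x ∈ s, f x = c * √(1 + f' x ^ 2) := by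
  rcases s.eq_empty_or_nonempty with rfl | ⟨x₀, hx₀⟩
  · exact ⟨1, one_ne_zero, by simp⟩
  refine ⟨f x₀ / √(1 + f' x₀ ^ 2),
    div_ne_zero (ne_zero_of_mul_eq_one_add_sq (hode x₀ hx₀)) (by positivity), fun x hx => ?_⟩
  rw [← div_eq_iff (by positivity)]
  exact eq_of_forall_hasDerivWithinAt_zero hs
    (fun z hz => hasDerivWithinAt_div_sqrt_of_mul_eq_one_add_sq (hf z hz) (hf' z hz) (hode z hz))
    hx hx₀

end CatenaryEquation

theorem catenary_ode_solutions_are_catenaries_general {s : Set ℝ} {f f' f'' : ℝ → ℝ}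
    (hs : Convex ℝ s) (hf : ∀ x ∈ s, HasDerivWithinAt f (f' x) s x)
    (hf' : ∀ x ∈ s, HasDerivWithinAt f' (f'' x) s x)
    (hode : ∀ x ∈ s, f x * f'' x = 1 + f' x ^ 2) :
    ∃ c ≠ 0, ∃ a, ∀ x ∈ s, f x = c * cosh ((x - a) / c) := by
  obtain ⟨c, hc, hfc⟩ := exists_eq_mul_sqrt_one_add_sq hs hf hf' hode
  have harsinh : ∀ x ∈ s, HasDerivWithinAt (fun z => arsinh (f' z)) c⁻¹ s x := fun x hx => by
    have hcx : c = f x / √(1 + f' x ^ 2) := eq_div_of_mul_eq (by positivity) (hfc x hx).symm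
    rw [hcx]
    exact hasDerivWithinAt_arsinh_of_mul_eq_one_add_sq (hf' x hx) (hode x hx)
  obtain ⟨a, ha⟩ := exists_eq_sub_div_of_forall_hasDerivWithinAt_inv hs hc harsinh
  refine ⟨c, hc, a, fun x hx => ?_⟩
  rw [hfc x hx, ← cosh_arsinh, ha x hx]

/-- Euler's theorem (analytic content): any positive `C²` solution of the catenary equation
`f·f'' = 1 + (f')²` on `ℝ` is of the form `f(x) = c·cosh((x − a)/c)` with `c > 0`. -/
theorem catenary_ode_solutions_are_catenaries (f : ℝ → ℝ) (hf : ContDiff ℝ 2 f)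
    (hpos : ∀ x : ℝ, 0 < f x)
    (hode : ∀ x : ℝ, f x * deriv (deriv f) x = 1 + (deriv f x) ^ 2) :
    ∃ c > (0 : ℝ), ∃ a : ℝ, ∀ x : ℝ, f x = c * Real.cosh ((x - a) / c) := by
  obtain ⟨c, -, a, hfc⟩ := catenary_ode_solutions_are_catenaries_general convex_univ
    (fun x _ => (hf.differentiable two_ne_zero x).hasDerivAt.hasDerivWithinAt)
    (fun x _ => (hf.differentiable_deriv_two x).hasDerivAt.hasDerivWithinAt) (fun x _ => hode x)
  have hc : 0 < c := pos_of_mul_pos_left (hfc 0 trivial ▸ hpos 0) (cosh_pos _).le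
  exact ⟨c, hc, a, fun x => hfc x trivial⟩
end

section
/- Define F : ℝ³ → ℝ by F(x,y,z) = sinh x · sinh y − sin z. Then at every point p ∈ ℝ³ with F(p) = 0, the mean curvature expression |∇F|²·ΔF − ∇Fᵀ·(Hess F)·∇F vanishes, where ∇F is the gradient, ΔF the Laplacian, and Hess F the Hessian matrix of F. (Hence the level set {F = 0}, Scherk's singly periodic minimal surface sin z = sinh x sinh y, is a minimal surface in ℝ³; it is invariant under the translation (0,0,2π).) -/
open Real

/-- The defining function of Scherk's singly periodic surface: `F(x,y,z) = sinh x · sinh y − sin z`. -/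
noncomputable def scherkF (x y z : ℝ) : ℝ := Real.sinh x * Real.sinh y - Real.sin z

/-- Partial derivative in `x` of a function of three variables. -/
noncomputable def pFx (F : ℝ → ℝ → ℝ → ℝ) (x y z : ℝ) : ℝ := deriv (fun t => F t y z) x
/-- Partial derivative in `y`. -/
noncomputable def pFy (F : ℝ → ℝ → ℝ → ℝ) (x y z : ℝ) : ℝ := deriv (fun t => F x t z) y
/-- Partial derivative in `z`. -/
noncomputable def pFz (F : ℝ → ℝ → ℝ → ℝ) (x y z : ℝ) : ℝ := deriv (fun t => F x y t) z
/-- Second partial derivative `F_xx`. -/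
noncomputable def pFxx (F : ℝ → ℝ → ℝ → ℝ) (x y z : ℝ) : ℝ := deriv (fun t => pFx F t y z) x
/-- Second partial derivative `F_yy`. -/
noncomputable def pFyy (F : ℝ → ℝ → ℝ → ℝ) (x y z : ℝ) : ℝ := deriv (fun t => pFy F x t z) y
/-- Second partial derivative `F_zz`. -/
noncomputable def pFzz (F : ℝ → ℝ → ℝ → ℝ) (x y z : ℝ) : ℝ := deriv (fun t => pFz F x y t) z
/-- Mixed second partial derivative `F_xy`. -/
noncomputable def pFxy (F : ℝ → ℝ → ℝ → ℝ) (x y z : ℝ) : ℝ := deriv (fun t => pFx F x t z) y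
/-- Mixed second partial derivative `F_xz`. -/
noncomputable def pFxz (F : ℝ → ℝ → ℝ → ℝ) (x y z : ℝ) : ℝ := deriv (fun t => pFx F x y t) z
/-- Mixed second partial derivative `F_yz`. -/
noncomputable def pFyz (F : ℝ → ℝ → ℝ → ℝ) (x y z : ℝ) : ℝ := deriv (fun t => pFy F x y t) z

/-- The mean curvature expression `|∇F|²·ΔF − ∇Fᵀ·(Hess F)·∇F` for a level set `{F = 0}` in `ℝ³`:
`(F_x² + F_y² + F_z²)(F_xx + F_yy + F_zz) − (F_x²F_xx + F_y²F_yy + F_z²F_zz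
  + 2F_xF_yF_xy + 2F_xF_zF_xz + 2F_yF_zF_yz)`. -/
noncomputable def meanCurvExpr (F : ℝ → ℝ → ℝ → ℝ) (x y z : ℝ) : ℝ :=
  ((pFx F x y z) ^ 2 + (pFy F x y z) ^ 2 + (pFz F x y z) ^ 2)
      * (pFxx F x y z + pFyy F x y z + pFzz F x y z)
    - ((pFx F x y z) ^ 2 * pFxx F x y z + (pFy F x y z) ^ 2 * pFyy F x y z
        + (pFz F x y z) ^ 2 * pFzz F x y z
        + 2 * pFx F x y z * pFy F x y z * pFxy F x y z
        + 2 * pFx F x y z * pFz F x y z * pFxz F x y z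
        + 2 * pFy F x y z * pFz F x y z * pFyz F x y z)

/-! On `F = f(x) g(y) - h(z)` every partial derivative acts on a single factor, so the mean curvature
expression is a polynomial in the one-variable derivatives. For `f = g = sinh` and `h = sin` the
relations `cosh² = 1 + sinh²` and `cos² = 1 - sin²` turn it into a polynomial in `sinh x`, `sinh y`,
`sin z` alone, and that polynomial is divisible by `F`. -/

/-- The function `(x, y, z) ↦ f(x) g(y) - h(z)`, whose zero set is the surface `h(z) = f(x) g(y)`.
Allowing arbitrary `f`, `g`, `h` makes this class closed under partial derivatives. -/
def mulSub (f g h : ℝ → ℝ) (x y z : ℝ) : ℝ := f x * g y - h z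

section mulSub

variable (f g h : ℝ → ℝ)

lemma pFx_mulSub : pFx (mulSub f g h) = mulSub (deriv f) g 0 := by
  ext x y z
  simp [pFx, mulSub]

lemma pFy_mulSub : pFy (mulSub f g h) = mulSub f (deriv g) 0 := by
  ext x y z
  simp [pFy, mulSub]

lemma pFz_mulSub : pFz (mulSub f g h) = mulSub 0 0 (deriv h) := by
  ext x y z
  simp [pFz, mulSub]

lemma pFxx_mulSub : pFxx (mulSub f g h) = mulSub (deriv (deriv f)) g 0 := by
  change pFx (pFx (mulSub f g h)) = _
  rw [pFx_mulSub, pFx_mulSub]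

lemma pFyy_mulSub : pFyy (mulSub f g h) = mulSub f (deriv (deriv g)) 0 := by
  change pFy (pFy (mulSub f g h)) = _
  rw [pFy_mulSub, pFy_mulSub]

lemma pFzz_mulSub : pFzz (mulSub f g h) = mulSub 0 0 (deriv (deriv h)) := by
  change pFz (pFz (mulSub f g h)) = _
  rw [pFz_mulSub, pFz_mulSub]

lemma pFxy_mulSub : pFxy (mulSub f g h) = mulSub (deriv f) (deriv g) 0 := by
  change pFy (pFx (mulSub f g h)) = _
  rw [pFx_mulSub, pFy_mulSub]

lemma pFxz_mulSub : pFxz (mulSub f g h) = 0 := by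
  change pFz (pFx (mulSub f g h)) = _
  rw [pFx_mulSub, pFz_mulSub]
  ext x y z
  simp [mulSub]

lemma pFyz_mulSub : pFyz (mulSub f g h) = 0 := by
  change pFz (pFy (mulSub f g h)) = _
  rw [pFy_mulSub, pFz_mulSub]
  ext x y z
  simp [mulSub]

lemma meanCurvExpr_mulSub (x y z : ℝ) :
    meanCurvExpr (mulSub f g h) x y z =
      (deriv f x * g y) ^ 2 * (f x * deriv (deriv g) y - deriv (deriv h) z)
        + (f x * deriv g y) ^ 2 * (deriv (deriv f) x * g y - deriv (deriv h) z)
        + deriv h z ^ 2 * (deriv (deriv f) x * g y + f x * deriv (deriv g) y)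
        - 2 * (f x * g y) * (deriv f x * deriv g y) ^ 2 := by
  simp only [meanCurvExpr, pFx_mulSub, pFy_mulSub, pFz_mulSub, pFxx_mulSub, pFyy_mulSub,
    pFzz_mulSub, pFxy_mulSub, pFxz_mulSub, pFyz_mulSub, mulSub, Pi.zero_apply]
  ring

end mulSub

lemma scherkF_eq_mulSub : scherkF = mulSub sinh sinh sin := rfl

lemma meanCurvExpr_scherkF (x y z : ℝ) :
    meanCurvExpr scherkF x y z =
      scherkF x y z * (2 * sinh x * sinh y * sin z - sinh x ^ 2 - sinh y ^ 2) := by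
  rw [scherkF_eq_mulSub, meanCurvExpr_mulSub]
  simp only [Real.deriv_sinh, Real.deriv_cosh, Real.deriv_sin, Real.deriv_cos', mulSub, mul_pow,
    cosh_sq, cos_sq']
  ring

/-- Scherk's singly periodic surface `sin z = sinh x sinh y` is minimal: the mean curvature
expression `|∇F|²·ΔF − ∇Fᵀ·(Hess F)·∇F` vanishes at every point of the level set `{F = 0}`. -/
theorem scherk_singly_periodic_is_minimal :
    ∀ x y z : ℝ, scherkF x y z = 0 → meanCurvExpr scherkF x y z = 0 := by
  intro x y z hF
  rw [meanCurvExpr_scherkF, hF, zero_mul]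
end
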